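/- Let 0 < α < 1, t > 0 and x > 0. Then for every integer k ≥ 0 one has a_k(x,t) > 0. -/

import Mathlib

open Real MeasureTheory

/-- The Mittag-Leffler function `E_α(r) = ∑ r^k / Γ(1+kα)`. -/
noncomputable def mittagLeffler (α r : ℝ) : ℝ :=
  ∑' k : ℕ, r ^ k / Real.Gamma (1 + k * α)

/-- The coefficients `a_k(x,t)` obtained by splitting the Fourier integral of the
fundamental solution over the intervals where `cos (xξ)` has a fixed sign. -/
noncomputable def aCoeff (α t x : ℝ) (k : ℕ) : ℝ :=
  if k = 0 then
    ∫ ξ in (0 : ℝ)..(π / (2 * x)),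
      mittagLeffler α ((1 - ξ ^ 2) * t ^ α) * Real.cos (x * ξ)
  else
    (-1 : ℝ) ^ k *
      ∫ ξ in (π * (2 * (k : ℝ) - 1) / (2 * x))..(π * (2 * (k : ℝ) + 1) / (2 * x)),
        mittagLeffler α ((1 - ξ ^ 2) * t ^ α) * Real.cos (x * ξ)

/-!
On `[0, ∞)` the function `u t = E_α (-t ^ α)` solves the Volterra equation
`u t + ∫₀ᵗ κ (t - s) u s ds = 1` with the Riemann–Liouville kernel `κ s = s ^ (α - 1) / Γ(α)`: the
kernels form a convolution semigroup, and convolving with `κ` shifts the power series by one term.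
For `α ≤ 1` the kernel is antitone. Before a first zero `z` of `u`, pick `m` so close to `z` that
`∫₀^{z - m} κ < 1`, with `u ≤ u m` on `[m, z]`. Passing from `m` to `z` the contribution of `[0, m]`
to the integral cannot grow, so `u` drops by at most `u m * ∫₀^{z - m} κ < u m`, and `u z > 0`.
Hence `E_α > 0` on the whole line, and `a_k` integrates a positive function against a half-wave on
which `(-1) ^ k * cos` is positive.
-/

open Set Filter Topology

theorem exp_neg_mul_rpow_le_Gamma_one_add {M y : ℝ} (hM : 0 ≤ M) (hy : 0 ≤ y) :
    exp (-M) * M ^ y ≤ Real.Gamma (1 + y) := by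
  have h_int : IntegrableOn (fun x : ℝ => exp (-x) * x ^ (1 + y - 1)) (Ioi 0) :=
    GammaIntegral_convergent (by linarith)
  rw [Gamma_eq_integral (by linarith), ← integral_exp_neg_Ioi, ← integral_mul_const]
  calc ∫ x in Ioi M, exp (-x) * M ^ y
      ≤ ∫ x in Ioi M, exp (-x) * x ^ (1 + y - 1) := by
        refine setIntegral_mono_on ((integrableOn_exp_neg_Ioi M).mul_const _)
          (h_int.mono_set (Ioi_subset_Ioi hM)) measurableSet_Ioi fun x hx => ?_
        have hMx : M ≤ x := le_of_lt hx
        rw [add_sub_cancel_left]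
        gcongr
    _ ≤ ∫ x in Ioi 0, exp (-x) * x ^ (1 + y - 1) := by
        refine setIntegral_mono_set h_int ?_ (Ioi_subset_Ioi hM).eventuallyLE
        filter_upwards [ae_restrict_mem measurableSet_Ioi] with x hx
        exact mul_nonneg (exp_pos _).le (rpow_nonneg (le_of_lt hx) _)

theorem Gamma_one_add_natCast_mul_pos {α : ℝ} (hα : 0 ≤ α) (k : ℕ) :
    0 < Real.Gamma (1 + k * α) :=
  Gamma_pos_of_pos (by positivity)

section MittagLeffler

variable {α : ℝ}

theorem summable_mittagLeffler (hα : 0 < α) (r : ℝ) :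
    Summable fun k : ℕ => r ^ k / Real.Gamma (1 + k * α) := by
  set B : ℝ := 2 * |r| + 1 with hB
  have hB_pos : 0 < B := by positivity
  -- With `M ^ α = B > 2 |r|`, the lower bound on `Γ` makes the series subgeometric of ratio `1/2`.
  set M : ℝ := B ^ α⁻¹ with hM
  have hM_pos : 0 < M := by positivity
  have hM_rpow : M ^ α = B := by rw [hM, rpow_inv_rpow hB_pos.le hα.ne']
  refine Summable.of_norm_bounded (summable_geometric_two.mul_left (exp M)) fun k => ?_
  have hΓ_lower : exp (-M) * B ^ k ≤ Real.Gamma (1 + k * α) := by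
    have h := exp_neg_mul_rpow_le_Gamma_one_add hM_pos.le (by positivity : 0 ≤ α * k)
    rwa [rpow_mul hM_pos.le, hM_rpow, rpow_natCast, mul_comm α] at h
  have hΓ_pos := Gamma_one_add_natCast_mul_pos hα.le k
  rw [norm_div, norm_pow, norm_eq_abs, norm_of_nonneg hΓ_pos.le, div_le_iff₀ hΓ_pos]
  calc |r| ^ k ≤ (1 / 2 * B) ^ k := by
        gcongr
        linarith [hB]
    _ = exp M * (1 / 2 : ℝ) ^ k * (exp (-M) * B ^ k) := by
        rw [exp_neg, mul_pow]
        field_simp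
    _ ≤ exp M * (1 / 2 : ℝ) ^ k * Real.Gamma (1 + k * α) := by gcongr

theorem hasSum_mittagLeffler (hα : 0 < α) (r : ℝ) :
    HasSum (fun k : ℕ => r ^ k / Real.Gamma (1 + k * α)) (mittagLeffler α r) :=
  (summable_mittagLeffler hα r).hasSum

theorem norm_pow_div_Gamma_le (hα : 0 ≤ α) {r R : ℝ} (h : |r| ≤ R) (k : ℕ) :
    ‖r ^ k / Real.Gamma (1 + k * α)‖ ≤ R ^ k / Real.Gamma (1 + k * α) := by
  have hΓ_pos := Gamma_one_add_natCast_mul_pos hα k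
  rw [norm_div, norm_pow, norm_eq_abs, norm_of_nonneg hΓ_pos.le]
  gcongr

theorem mittagLeffler_zero (α : ℝ) : mittagLeffler α 0 = 1 := by
  rw [mittagLeffler, tsum_eq_single 0 fun k hk => by simp [hk]]
  simp

theorem continuous_mittagLeffler (hα : 0 < α) : Continuous (mittagLeffler α) := by
  refine continuous_iff_continuousAt.2 fun r => ?_
  have h_ball : ContinuousOn (mittagLeffler α) (Metric.ball 0 (|r| + 1)) := by
    refine continuousOn_tsum (fun k => by fun_prop) (summable_mittagLeffler hα (|r| + 1))
      fun k s hs => norm_pow_div_Gamma_le hα.le ?_ k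
    exact (mem_ball_zero_iff.1 hs).le
  exact h_ball.continuousAt (Metric.isOpen_ball.mem_nhds (by simp))

theorem mittagLeffler_pos_of_nonneg (hα : 0 < α) {r : ℝ} (hr : 0 ≤ r) :
    0 < mittagLeffler α r := by
  refine (summable_mittagLeffler hα r).tsum_pos (fun k => ?_) 0 (by simp)
  exact div_nonneg (pow_nonneg hr k) (Gamma_one_add_natCast_mul_pos hα.le k).le

end MittagLeffler

section FracKernel

/-- The Riemann–Liouville kernel `s ^ (β - 1) / Γ(β)`: convolution with it on `[0, t]` is the
fractional integral of order `β`. It is meant for `0 < β` and `0 ≤ s`. -/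
noncomputable def fracKernel (β s : ℝ) : ℝ :=
  s ^ (β - 1) / Real.Gamma β

variable {α β : ℝ}

theorem fracKernel_nonneg (hβ : 0 ≤ β) {s : ℝ} (hs : 0 ≤ s) : 0 ≤ fracKernel β s :=
  div_nonneg (rpow_nonneg hs _) (Gamma_nonneg_of_nonneg hβ)

theorem antitoneOn_fracKernel (hβ : 0 ≤ β) (hβ1 : β ≤ 1) : AntitoneOn (fracKernel β) (Ioi 0) :=
  fun _ hr _ _ hrs => div_le_div_of_nonneg_right
    (rpow_le_rpow_of_nonpos hr hrs (sub_nonpos.2 hβ1)) (Gamma_nonneg_of_nonneg hβ)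

theorem intervalIntegrable_fracKernel (hβ : 0 < β) (a b : ℝ) :
    IntervalIntegrable (fracKernel β) volume a b :=
  (intervalIntegral.intervalIntegrable_rpow' (by linarith)).div_const _

theorem integral_rpow_mul_sub_rpow (hα : 0 < α) (hβ : 0 < β) {t : ℝ} (ht : 0 < t) :
    ∫ s in 0..t, s ^ (β - 1) * (t - s) ^ (α - 1) =
      t ^ (β + α - 1) * (Real.Gamma β * Real.Gamma α / Real.Gamma (β + α)) := by
  have h := Complex.betaIntegral_scaled (β : ℂ) (α : ℂ) ht
  rw [Complex.betaIntegral_eq_Gamma_mul_div _ _ (by simpa) (by simpa)] at h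
  have h_ofReal : ∫ s in 0..t, (s : ℂ) ^ ((β : ℂ) - 1) * ((t : ℂ) - s) ^ ((α : ℂ) - 1) =
      ∫ s in 0..t, ((s ^ (β - 1) * (t - s) ^ (α - 1) : ℝ) : ℂ) := by
    refine intervalIntegral.integral_congr fun s hs => ?_
    rw [uIcc_of_le ht.le] at hs
    push_cast [Complex.ofReal_cpow hs.1, Complex.ofReal_cpow (sub_nonneg.2 hs.2)]
    rfl
  rw [h_ofReal, intervalIntegral.integral_ofReal] at h
  apply Complex.ofReal_injective
  rw [h]
  push_cast [Complex.ofReal_cpow ht.le, ← Complex.Gamma_ofReal]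
  rfl

theorem integral_fracKernel_mul_fracKernel (hα : 0 < α) (hβ : 0 < β) {t : ℝ} (ht : 0 < t) :
    ∫ s in 0..t, fracKernel α (t - s) * fracKernel β s = fracKernel (β + α) t := by
  calc ∫ s in 0..t, fracKernel α (t - s) * fracKernel β s
      = ∫ s in 0..t, s ^ (β - 1) * (t - s) ^ (α - 1) / (Real.Gamma α * Real.Gamma β) := by
        refine intervalIntegral.integral_congr fun s _ => ?_
        simp only [fracKernel]
        ring
    _ = fracKernel (β + α) t := by
        have := Gamma_pos_of_pos hα
        have := Gamma_pos_of_pos hβ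
        rw [intervalIntegral.integral_div, integral_rpow_mul_sub_rpow hα hβ ht,
          fracKernel]
        field_simp

theorem mul_rpow_pow_div_Gamma_eq {t : ℝ} (ht : 0 ≤ t) (c : ℝ) (k : ℕ) :
    (c * t ^ α) ^ k / Real.Gamma (1 + k * α) = c ^ k * fracKernel (1 + k * α) t := by
  rw [fracKernel, add_sub_cancel_left, mul_comm (k : ℝ) α, rpow_mul ht, rpow_natCast]
  ring

end FracKernel

theorem hasSum_intervalIntegral_mul_of_norm_le {ι : Type*} [Countable ι] {κ g : ℝ → ℝ}
    {f : ι → ℝ → ℝ} {b : ι → ℝ} {p q : ℝ} (hκ : IntervalIntegrable κ volume p q)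
    (hf_cont : ∀ i, Continuous (f i)) (hf_le : ∀ i, ∀ s ∈ uIoc p q, ‖f i s‖ ≤ b i)
    (hb : Summable b) (hf_sum : ∀ s ∈ uIoc p q, HasSum (f · s) (g s)) :
    HasSum (fun i => ∫ s in p..q, κ s * f i s) (∫ s in p..q, κ s * g s) := by
  refine intervalIntegral.hasSum_integral_of_dominated_convergence (fun i s => ‖κ s‖ * b i)
    (fun i => ?_) (fun i => ae_of_all _ fun s hs => ?_) (ae_of_all _ fun s _ => hb.mul_left _) ?_
    (ae_of_all _ fun s hs => (hf_sum s hs).mul_left _)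
  · exact (hκ.mul_continuousOn (hf_cont i).continuousOn).def'.aestronglyMeasurable
  · rw [norm_mul]
    exact mul_le_mul_of_nonneg_left (hf_le i s hs) (norm_nonneg _)
  · simp_rw [tsum_mul_left]
    exact hκ.norm.mul_const _

theorem intervalIntegrable_comp_sub_left {κ : ℝ → ℝ} {t : ℝ}
    (hκ : IntervalIntegrable κ volume 0 t) :
    IntervalIntegrable (fun s => κ (t - s)) volume 0 t := by
  simpa using (hκ.comp_sub_left t).symm

theorem integral_fracKernel_mul_mittagLeffler {α : ℝ} (hα : 0 < α) (c : ℝ) {t : ℝ}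
    (ht : 0 < t) :
    c * ∫ s in 0..t, fracKernel α (t - s) * mittagLeffler α (c * s ^ α) =
      mittagLeffler α (c * t ^ α) - 1 := by
  have h_termwise : HasSum
      (fun k : ℕ => ∫ s in 0..t,
        fracKernel α (t - s) * ((c * s ^ α) ^ k / Real.Gamma (1 + k * α)))
      (∫ s in 0..t, fracKernel α (t - s) * mittagLeffler α (c * s ^ α)) := by
    refine hasSum_intervalIntegral_mul_of_norm_le
      (intervalIntegrable_comp_sub_left (intervalIntegrable_fracKernel hα 0 t))
      (fun k => by fun_prop (disch := exact hα.le)) (fun k s hs => norm_pow_div_Gamma_le hα.le ?_ k)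
      (summable_mittagLeffler hα (|c| * t ^ α)) (fun s _ => hasSum_mittagLeffler hα _)
    rw [uIoc_of_le ht.le] at hs
    rw [abs_mul, abs_of_nonneg (rpow_nonneg hs.1.le _)]
    have := hs.1.le
    have := hs.2
    gcongr
  have h_shift (k : ℕ) : c * ∫ s in 0..t,
        fracKernel α (t - s) * ((c * s ^ α) ^ k / Real.Gamma (1 + k * α)) =
      (c * t ^ α) ^ (k + 1) / Real.Gamma (1 + (k + 1 : ℕ) * α) := by
    calc c * ∫ s in 0..t, fracKernel α (t - s) * ((c * s ^ α) ^ k / Real.Gamma (1 + k * α))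
        = c * ∫ s in 0..t, c ^ k * (fracKernel α (t - s) * fracKernel (1 + k * α) s) := by
          congr 1
          refine intervalIntegral.integral_congr fun s hs => ?_
          rw [uIcc_of_le ht.le] at hs
          simp only [mul_rpow_pow_div_Gamma_eq hs.1, mul_left_comm]
      _ = c ^ (k + 1) * fracKernel (1 + k * α + α) t := by
          rw [intervalIntegral.integral_const_mul,
            integral_fracKernel_mul_fracKernel hα (by positivity) ht]
          ring
      _ = (c * t ^ α) ^ (k + 1) / Real.Gamma (1 + (k + 1 : ℕ) * α) := by
          rw [mul_rpow_pow_div_Gamma_eq ht.le]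
          push_cast
          ring_nf
  have h_tail := (hasSum_nat_add_iff' 1).2 (hasSum_mittagLeffler hα (c * t ^ α))
  rw [Finset.sum_range_one, pow_zero, Nat.cast_zero, zero_mul, add_zero, Gamma_one, div_one]
    at h_tail
  exact (h_termwise.mul_left c).unique (by simpa only [h_shift] using h_tail)

theorem exists_first_nonpos {u : ℝ → ℝ} {a t : ℝ} (hu : ContinuousOn u (Ici a)) (hua : 0 < u a)
    (hat : a ≤ t) (hut : u t ≤ 0) : ∃ z, a < z ∧ u z ≤ 0 ∧ ∀ s ∈ Ico a z, 0 < u s := by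
  set Z : Set ℝ := Ici a ∩ u ⁻¹' Iic 0
  have hZ_closed : IsClosed Z := hu.preimage_isClosed_of_isClosed isClosed_Ici isClosed_Iic
  have hZ_bdd : BddBelow Z := ⟨a, fun s hs => hs.1⟩
  obtain ⟨haz, huz⟩ : sInf Z ∈ Z := hZ_closed.csInf_mem ⟨t, hat, hut⟩ hZ_bdd
  refine ⟨sInf Z, lt_of_le_of_ne haz fun h => ?_, huz, fun s hs => ?_⟩
  · exact (h ▸ hua).not_ge huz
  · by_contra! hus
    exact (csInf_le hZ_bdd ⟨hs.1, hus⟩).not_gt hs.2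

theorem exists_forall_integral_lt {κ : ℝ → ℝ} {z ε : ℝ} (hz : 0 < z)
    (hκ : IntervalIntegrable κ volume 0 z) (hε : 0 < ε) :
    ∃ δ ∈ Ioc 0 z, ∀ h ∈ Icc 0 δ, ∫ s in 0..h, κ s < ε := by
  have h_cont : ContinuousWithinAt (fun h => ∫ s in 0..h, κ s) (Icc 0 z) 0 := by
    have := intervalIntegral.continuousOn_primitive_interval' hκ left_mem_uIcc 0 left_mem_uIcc
    rwa [uIcc_of_le hz.le] at this
  have h_small : ∀ᶠ h in 𝓝[≥] 0, ∫ s in 0..h, κ s < ε := by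
    rw [← nhdsWithin_Icc_eq_nhdsGE hz]
    exact h_cont.eventually_lt_const (by simpa using hε)
  obtain ⟨δ, hδ, hδ_Icc⟩ :=
    mem_nhdsGE_iff_exists_Icc_subset.1 (h_small.and (Icc_mem_nhdsGE hz))
  exact ⟨δ, ⟨hδ, (hδ_Icc (right_mem_Icc.2 hδ.le)).2.2⟩, fun h hh => (hδ_Icc hh).1⟩

section VolterraEquation

variable {κ g u : ℝ → ℝ}

theorem volterra_sub_le_mul_integral (hκ_anti : AntitoneOn κ (Ioi 0))
    (hκ_nonneg : ∀ s, 0 < s → 0 ≤ κ s) (hκ_int : ∀ t, 0 ≤ t → IntervalIntegrable κ volume 0 t)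
    (hg : MonotoneOn g (Ici 0)) (hu : ContinuousOn u (Ici 0))
    (hvolterra : ∀ t, 0 ≤ t → u t + ∫ s in 0..t, κ (t - s) * u s = g t) {m z : ℝ} (hm : 0 ≤ m)
    (hmz : m ≤ z) (hu_nonneg : ∀ s ∈ Ioo 0 m, 0 ≤ u s) (hu_le : ∀ s ∈ Ioo m z, u s ≤ u m) :
    u m - u z ≤ u m * ∫ s in 0..(z - m), κ s := by
  have hz : 0 ≤ z := hm.trans hmz
  have h_int (t : ℝ) (ht : 0 ≤ t) :
      IntervalIntegrable (fun s => κ (t - s) * u s) volume 0 t := by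
    refine (intervalIntegrable_comp_sub_left (hκ_int t ht)).mul_continuousOn (hu.mono ?_)
    exact uIcc_of_le ht ▸ Icc_subset_Ici_self
  have hm_mem : m ∈ uIcc 0 z := uIcc_of_le hz ▸ ⟨hm, hmz⟩
  have h_int_head := (h_int z hz).mono_set (uIcc_subset_uIcc_left hm_mem)
  have h_int_tail := (h_int z hz).mono_set (uIcc_subset_uIcc_right hm_mem)
  have h_head : ∫ s in 0..m, κ (z - s) * u s ≤ ∫ s in 0..m, κ (m - s) * u s := by
    refine intervalIntegral.integral_mono_on_of_le_Ioo hm h_int_head (h_int m hm) fun s hs => ?_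
    refine mul_le_mul_of_nonneg_right (hκ_anti (sub_pos.2 hs.2) ?_ ?_) (hu_nonneg s hs)
    · exact sub_pos.2 (hs.2.trans_le hmz)
    · exact sub_le_sub_right hmz s
  have h_tail : ∫ s in m..z, κ (z - s) * u s ≤ u m * ∫ s in 0..(z - m), κ s := by
    calc ∫ s in m..z, κ (z - s) * u s ≤ ∫ s in m..z, κ (z - s) * u m := by
          refine intervalIntegral.integral_mono_on_of_le_Ioo hmz h_int_tail ?_ fun s hs =>
            mul_le_mul_of_nonneg_left (hu_le s hs) (hκ_nonneg _ (sub_pos.2 hs.2))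
          exact ((intervalIntegrable_comp_sub_left (hκ_int z hz)).mono_set
            (uIcc_subset_uIcc_right hm_mem)).mul_const _
      _ = u m * ∫ s in 0..(z - m), κ s := by
          rw [intervalIntegral.integral_mul_const, intervalIntegral.integral_comp_sub_left κ,
            sub_self, mul_comm]
  have h_split := intervalIntegral.integral_add_adjacent_intervals h_int_head h_int_tail
  linarith [hvolterra m hm, hvolterra z hz, hg hm hz hmz]

theorem pos_of_volterra_antitoneOn (hκ_anti : AntitoneOn κ (Ioi 0))
    (hκ_nonneg : ∀ s, 0 < s → 0 ≤ κ s) (hκ_int : ∀ t, 0 ≤ t → IntervalIntegrable κ volume 0 t)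
    (hg : MonotoneOn g (Ici 0)) (hg_pos : 0 < g 0) (hu : ContinuousOn u (Ici 0))
    (hvolterra : ∀ t, 0 ≤ t → u t + ∫ s in 0..t, κ (t - s) * u s = g t) {t : ℝ} (ht : 0 ≤ t) :
    0 < u t := by
  by_contra! hut
  have hu0 : 0 < u 0 := by
    have := hvolterra 0 le_rfl
    rw [intervalIntegral.integral_same, add_zero] at this
    rwa [this]
  obtain ⟨z, hz, huz, hu_pos⟩ := exists_first_nonpos hu hu0 ht hut
  obtain ⟨δ, ⟨hδ, hδz⟩, hκ_lt⟩ := exists_forall_integral_lt hz (hκ_int z hz.le) one_pos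
  have hδz_nonneg : 0 ≤ z - δ := sub_nonneg.2 hδz
  have hδz_lt : z - δ < z := sub_lt_self z hδ
  obtain ⟨m, ⟨hδm, hmz⟩, hm_max⟩ := isCompact_Icc.exists_isMaxOn (nonempty_Icc.2 hδz_lt.le)
    (hu.mono fun s hs => hδz_nonneg.trans hs.1)
  have hum : 0 < u m := (hu_pos _ ⟨hδz_nonneg, hδz_lt⟩).trans_le (hm_max ⟨le_rfl, hδz_lt.le⟩)
  have h_drop : u m - u z ≤ u m * ∫ s in 0..(z - m), κ s :=
    volterra_sub_le_mul_integral hκ_anti hκ_nonneg hκ_int hg hu hvolterra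
      (hδz_nonneg.trans hδm) hmz (fun s hs => (hu_pos s ⟨hs.1.le, hs.2.trans_le hmz⟩).le)
      (fun s hs => hm_max ⟨hδm.trans hs.1.le, hs.2.le⟩)
  have h_drop_lt : u m * ∫ s in 0..(z - m), κ s < u m :=
    mul_lt_of_lt_one_right hum (hκ_lt _ ⟨sub_nonneg.2 hmz, by linarith⟩)
  linarith

end VolterraEquation

theorem mittagLeffler_neg_rpow_pos {α t : ℝ} (hα : 0 < α) (hα1 : α ≤ 1) (ht : 0 ≤ t) :
    0 < mittagLeffler α (-t ^ α) := by
  refine pos_of_volterra_antitoneOn (κ := fracKernel α) (g := fun _ => 1)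
    (u := fun t => mittagLeffler α (-t ^ α)) (antitoneOn_fracKernel hα.le hα1)
    (fun s hs => fracKernel_nonneg hα.le hs.le)
    (fun t _ => intervalIntegrable_fracKernel hα 0 t) monotoneOn_const one_pos
    ((continuous_mittagLeffler hα).comp (continuous_rpow_const hα.le).neg).continuousOn
    (fun t ht => ?_) ht
  rcases ht.eq_or_lt with rfl | ht
  · simp [zero_rpow hα.ne', mittagLeffler_zero]
  · have h := integral_fracKernel_mul_mittagLeffler hα (-1) ht
    simp only [neg_one_mul] at h
    linarith

theorem mittagLeffler_pos {α : ℝ} (hα : 0 < α) (hα1 : α ≤ 1) (r : ℝ) :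
    0 < mittagLeffler α r := by
  rcases le_total 0 r with hr | hr
  · exact mittagLeffler_pos_of_nonneg hα hr
  · have hr' : 0 ≤ -r := neg_nonneg.2 hr
    have h := mittagLeffler_neg_rpow_pos hα hα1 (rpow_nonneg hr' α⁻¹)
    rwa [rpow_inv_rpow hr' hα.ne', neg_neg] at h

theorem neg_one_pow_mul_integral_mul_cos_pos {f : ℝ → ℝ} {a b x : ℝ} (k : ℕ)
    (hf : ContinuousOn f (Icc a b)) (hf_pos : ∀ ξ ∈ Ioo a b, 0 < f ξ) (hx : 0 < x) (hab : a < b)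
    (ha : π * (2 * k - 1) / (2 * x) ≤ a) (hb : b ≤ π * (2 * k + 1) / (2 * x)) :
    0 < (-1) ^ k * ∫ ξ in a..b, f ξ * cos (x * ξ) := by
  rw [← intervalIntegral.integral_const_mul]
  refine intervalIntegral.intervalIntegral_pos_of_pos_on ?_ (fun ξ hξ => ?_) hab
  · refine ContinuousOn.intervalIntegrable ?_
    rw [uIcc_of_le hab.le]
    fun_prop
  · have h_lower := (div_lt_iff₀ (by positivity)).1 (ha.trans_lt hξ.1)
    have h_upper := (lt_div_iff₀ (by positivity)).1 (hξ.2.trans_le hb)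
    rw [mul_left_comm, ← cos_sub_nat_mul_pi]
    exact mul_pos (hf_pos ξ hξ) (cos_pos_of_mem_Ioo ⟨by linarith, by linarith⟩)

theorem aCoeff_pos_general {α x : ℝ} (hα : 0 < α) (hα1 : α ≤ 1) (t : ℝ) (hx : 0 < x) (k : ℕ) :
    0 < aCoeff α t x k := by
  set f : ℝ → ℝ := fun ξ => mittagLeffler α ((1 - ξ ^ 2) * t ^ α)
  have hf (a b : ℝ) : ContinuousOn f (Icc a b) :=
    ((continuous_mittagLeffler hα).comp (by fun_prop)).continuousOn
  have hf_pos (a b : ℝ) : ∀ ξ ∈ Ioo a b, 0 < f ξ := fun ξ _ => mittagLeffler_pos hα hα1 _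
  rw [aCoeff]
  split_ifs with hk
  · have h_quarter : 0 < π / (2 * x) := by positivity
    simpa using neg_one_pow_mul_integral_mul_cos_pos 0 (hf 0 (π / (2 * x))) (hf_pos _ _) hx
      h_quarter (by simpa [neg_div] using h_quarter.le) (by simp)
  · refine neg_one_pow_mul_integral_mul_cos_pos k (hf _ _) (hf_pos _ _) hx ?_ le_rfl le_rfl
    gcongr
    linarith

theorem aCoeff_pos (α t x : ℝ) (hα : 0 < α) (hα1 : α < 1) (ht : 0 < t) (hx : 0 < x)
    (k : ℕ) : 0 < aCoeff α t x k :=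
  aCoeff_pos_general hα hα1.le t hx k
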